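/- arXiv:1211.5209 — 2 statements merged into one kernel-verified Lean document; each statement's English description precedes it below -/
import Mathlib

section
/- The least cardinality of a family F ⊆ ω^ω such that for every g ∈ ω^ω there exists f ∈ F with f(k) = g(k) for infinitely many k equals non(M), the least cardinality of a non-meager subset of ω^ω. (In the paper's notation: b_≂ = non(M), where f ≂ g iff f(k) ≠ g(k) for all but finitely many k.) -/
open Cardinal Set

/-!
If `S` is not meagre then, for every `g`, it meets the dense `Gδ` set of all `f` that agree with
`g` infinitely often.

Conversely, suppose that every `g` agrees infinitely often with a member of `F`. Then `F` is
infinite, so it is enough to find a nonmeagre set of size at most `#F * #F`, which is done by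
letting `F` guess twice. Enumerate the basic open sets of `ℕ → ℕ`. A first guess `h ∈ F` gives a
sequence `M` growing fast enough that, for infinitely many `i`, each of the first `M i` basic sets
contains one of the first `M (i + 1)` that lies in the `i`-th given dense open set. Once `M` is
fixed, choosing such a refinement for each of the first `M i` basic sets at once amounts to naming
an element of a countable set, so a second guess `f ∈ F` chooses correctly at infinitely many of
these stages `i`. Following the refinements chosen by `f` produces a point which depends only on
`h` and `f` and which lies in infinitely many of the given dense open sets.
-/

section InfinitelyEqual

variable {ι : Type*} {α β : ι → Type*}

/-- A family `F` of functions is infinitely equal if every function agrees at infinitely many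
arguments with some member of `F`. The least size of such an `F ⊆ ω^ω` is the cardinal `b_≂`. -/
def IsInfinitelyEqual (F : Set (∀ i, α i)) : Prop :=
  ∀ g : ∀ i, α i, ∃ f ∈ F, {i | f i = g i}.Infinite

theorem IsInfinitelyEqual.image_piMap {F : Set (∀ i, α i)} (hF : IsInfinitelyEqual F)
    {d : ∀ i, α i → β i} (hd : ∀ i, (d i).Surjective) : IsInfinitelyEqual (Pi.map d '' F) := by
  intro g
  choose s hs using fun i ↦ hd i (g i)
  obtain ⟨f, hfF, hf⟩ := hF s
  refine ⟨Pi.map d f, mem_image_of_mem _ hfF, hf.mono fun i (hi : f i = s i) ↦ ?_⟩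
  change d i (f i) = g i
  rw [hi, hs]

theorem IsInfinitelyEqual.infinite [∀ i, Infinite (α i)] {F : Set (∀ i, α i)}
    (hF : IsInfinitelyEqual F) : F.Infinite := by
  intro hfin
  choose g hg using fun i ↦ (hfin.image (Function.eval i)).exists_notMem
  obtain ⟨f, hfF, hf⟩ := hF g
  obtain ⟨i, hi⟩ := hf.nonempty
  exact hg i ⟨f, hfF, hi⟩

end InfinitelyEqual

section Residual

variable {E : ℕ → Type*} [∀ n, TopologicalSpace (E n)] [∀ n, DiscreteTopology (E n)]

theorem setOf_exists_ge_eq_mem_residual (g : ∀ n, E n) (n : ℕ) :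
    {f : ∀ n, E n | ∃ k ≥ n, f k = g k} ∈ residual (∀ n, E n) := by
  refine residual_of_dense_open ?_ ?_
  · simp only [ofPred_exists, ofPred_and]
    exact isOpen_iUnion fun k ↦ isOpen_const.inter
      ((isOpen_discrete {g k}).preimage (continuous_apply k))
  · rw [(PiNat.isTopologicalBasis_cylinders E).dense_iff]
    rintro _ ⟨x, m, rfl⟩ -
    refine ⟨Function.update x (max m n) (g (max m n)), ?_, max m n, le_max_right m n, by simp⟩
    exact PiNat.cylinder_anti x (le_max_left m n) (PiNat.update_mem_cylinder x _ _)

theorem setOf_infinite_eq_mem_residual (g : ∀ n, E n) :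
    {f : ∀ n, E n | {k | f k = g k}.Infinite} ∈ residual (∀ n, E n) := by
  have hres := countable_iInter_mem.2 (setOf_exists_ge_eq_mem_residual g)
  refine Filter.mem_of_superset hres fun f hf ↦ ?_
  exact Nat.frequently_atTop_iff_infinite.1 (Filter.frequently_atTop.2 (mem_iInter.1 hf))

theorem isInfinitelyEqual_of_not_isMeagre {S : Set (∀ n, E n)} (hS : ¬ IsMeagre S) :
    IsInfinitelyEqual S := by
  intro g
  by_contra! hg
  exact hS (Filter.mem_of_superset (setOf_infinite_eq_mem_residual g) fun f hf hfS ↦ hf (hg f hfS))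

end Residual

section Restriction

variable {ι : Type*} {β : ι → Type*}

theorem exists_injective_forall_mem_of_lt_card {D : ℕ → Finset ι}
    (hD : ∀ n, n < (D n).card) : ∃ k : ℕ → ι, k.Injective ∧ ∀ n, k n ∈ D n := by
  classical
  rw [← Finset.all_card_le_biUnion_card_iff_exists_injective]
  intro s
  rcases s.eq_empty_or_nonempty with rfl | hs
  · simp
  · calc s.card ≤ s.max' hs + 1 := by
          simpa using Finset.card_le_card (t := Finset.range (s.max' hs + 1))
            fun i hi ↦ Finset.mem_range_succ_iff.2 (s.le_max' i hi)
      _ ≤ (D (s.max' hs)).card := hD _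
      _ ≤ (s.biUnion D).card :=
          Finset.card_le_card (Finset.subset_biUnion_of_mem D (s.max'_mem hs))

theorem exists_forall_apply_eq_of_injective [∀ i, Nonempty (β i)] {κ : Type*} {k : κ → ι}
    (hk : k.Injective) (v : ∀ n, β (k n)) : ∃ f : ∀ i, β i, ∀ n, f (k n) = v n := by
  have hvalue (i : ι) : ∃ b : β i, ∀ n (hn : k n = i), b = hn ▸ v n := by
    by_cases hi : ∃ n, k n = i
    · obtain ⟨n, rfl⟩ := hi
      refine ⟨v n, fun m hm ↦ ?_⟩
      obtain rfl := hk hm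
      rfl
    · exact ⟨Classical.arbitrary _, fun n hn ↦ (hi ⟨n, hn⟩).elim⟩
  choose f hf using hvalue
  exact ⟨f, fun n ↦ hf (k n) n rfl⟩

theorem exists_forall_infinite_setOf_eq_of_isInfinitelyEqual [Countable ι] [Infinite ι]
    [∀ i, Countable (β i)] [∀ i, Nonempty (β i)] :
    ∃ R : (ℕ → ℕ) → ∀ i, β i, ∀ F, IsInfinitelyEqual F → ∀ X : Set ι, X.Infinite →
      ∀ g : ∀ i, β i, ∃ f ∈ F, {i ∈ X | R f i = g i}.Infinite := by
  classical
  -- The `n`-th guess names `n + 1` elements of `X` and the values of `g` there: this is enough room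
  -- to select pairwise distinct elements, one from each guess.
  let Guess (n : ℕ) : Type _ := Σ D : {D : Finset ι // D.card = n + 1}, ∀ i : D.1, β i
  have (n : ℕ) : Nonempty (Guess n) :=
    have ⟨D, hD⟩ := Infinite.exists_subset_card_eq ι (n + 1)
    ⟨⟨D, hD⟩, fun _ ↦ Classical.arbitrary _⟩
  choose d hd using fun n ↦ exists_surjective_nat (Guess n)
  have hselect (w : ∀ n, Guess n) : ∃ (r : ∀ i, β i) (k : ℕ → ι), k.Injective ∧
      ∀ n, ∃ hn : k n ∈ (w n).1.1, r (k n) = (w n).2 ⟨k n, hn⟩ := by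
    obtain ⟨k, hinj, hk⟩ := exists_injective_forall_mem_of_lt_card (D := fun n ↦ (w n).1.1)
      fun n ↦ n.lt_succ_self.trans_eq (w n).1.2.symm
    obtain ⟨r, hr⟩ := exists_forall_apply_eq_of_injective hinj fun n ↦ (w n).2 ⟨k n, hk n⟩
    exact ⟨r, k, hinj, fun n ↦ ⟨hk n, hr n⟩⟩
  choose r k hinj hr using hselect
  refine ⟨fun f ↦ r (Pi.map d f), fun F hF X hX g ↦ ?_⟩
  choose D hDX hDcard using fun n ↦ hX.exists_subset_card_eq (n + 1)
  let u (n : ℕ) : Guess n := ⟨⟨D n, hDcard n⟩, fun i ↦ g i⟩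
  obtain ⟨_, ⟨f, hfF, rfl⟩, hf⟩ := hF.image_piMap hd u
  refine ⟨f, hfF, (hf.image (hinj (Pi.map d f)).injOn).mono ?_⟩
  rintro _ ⟨n, hn, rfl⟩
  have hcorrect : ∀ w, w = u n → ∀ i (hi : i ∈ w.1.1), i ∈ X ∧ w.2 ⟨i, hi⟩ = g i := by
    rintro _ rfl i hi
    exact ⟨hDX n hi, rfl⟩
  obtain ⟨hmem, heq⟩ := hr (Pi.map d f) n
  exact (hcorrect _ hn _ hmem).imp_right heq.trans

end Restriction

section Scale

theorem exists_monotone_gt_id_ge (h : ℕ → ℕ) :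
    ∃ h' : ℕ → ℕ, Monotone h' ∧ (∀ m, m < h' m) ∧ ∀ m, h m ≤ h' m := by
  refine ⟨fun m ↦ m + 1 + partialSups h m, fun a b hab ↦ ?_, fun m ↦ ?_, fun m ↦ ?_⟩
  · exact add_le_add (by lia) ((partialSups h).monotone hab)
  · lia
  · exact (le_partialSups h m).trans (Nat.le_add_left _ _)

theorem infinite_setOf_apply_iterate_le {h φ : ℕ → ℕ} (hh : Monotone h) (hid : ∀ m, m < h m)
    (hφ : Monotone φ) (hinf : {m | φ (φ m) ≤ h m}.Infinite) :
    {i | φ (h^[i] 0) ≤ h^[i + 1] 0}.Infinite := by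
  have hsucc (i : ℕ) : h^[i + 1] 0 = h (h^[i] 0) := Function.iterate_succ_apply' h i 0
  have hmono : StrictMono fun i ↦ h^[i] 0 := strictMono_nat_of_lt_succ fun i ↦ by
    simpa only [hsucc] using hid _
  -- If `φ` overtakes the iterates of `h` from some stage on, then `φ ∘ φ` eventually dominates `h`.
  by_contra hfin
  obtain ⟨N, hN⟩ := (not_infinite.1 hfin).bddAbove
  have hslow (i : ℕ) (hi : N < i) : h^[i + 1] 0 < φ (h^[i] 0) := by
    by_contra! hle
    exact hi.not_ge (hN hle)
  obtain ⟨m, hm, hmN⟩ := hinf.exists_gt (h^[N + 1] 0)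
  obtain ⟨i, him, hmi⟩ : ∃ i, h^[i] 0 < m + 1 ∧ m + 1 ≤ h^[i + 1] 0 :=
    hmono.exists_between_of_tendsto_atTop hmono.tendsto_atTop m.succ_pos
  have hNi : N < i := by
    have := hmono.lt_iff_lt.1 (hmN.trans hmi)
    lia
  refine (show φ (φ m) ≤ h m from hm).not_gt ?_
  calc h m ≤ h (h^[i + 1] 0) := hh (by lia)
    _ = h^[i + 2] 0 := (hsucc _).symm
    _ < φ (h^[i + 1] 0) := hslow _ (by lia)
    _ ≤ φ (φ (h^[i] 0)) := hφ (hslow i hNi).le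
    _ ≤ φ (φ m) := hφ (hφ (by lia))

theorem exists_strictMono_forall_infinite_setOf_apply_le :
    ∃ M : (ℕ → ℕ) → ℕ → ℕ, (∀ h, StrictMono (M h)) ∧ ∀ F, IsInfinitelyEqual F →
      ∀ φ : ℕ → ℕ, ∃ h ∈ F, {i | φ (M h i) ≤ M h (i + 1)}.Infinite := by
  choose up hup hid hle using exists_monotone_gt_id_ge
  refine ⟨fun h i ↦ (up h)^[i] 0, fun h ↦ strictMono_nat_of_lt_succ fun i ↦ ?_, fun F hF φ ↦ ?_⟩
  · simpa only [Function.iterate_succ_apply'] using hid h _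
  · obtain ⟨h, hhF, hh⟩ := hF fun m ↦ up φ (up φ m)
    have hinf : {m | up φ (up φ m) ≤ up h m}.Infinite :=
      hh.mono fun m (hm : h m = _) ↦ hm.symm.trans_le (hle h m)
    exact ⟨h, hhF, (infinite_setOf_apply_iterate_le (hup h) (hid h) (hup φ) hinf).mono
      fun i hi ↦ (hle φ _).trans hi⟩

end Scale

section Descent

variable {P : Type*} [Preorder P]

/-- A refinement of `A` in `B`: a choice, for every element of `A`, of an element of `B` below it.
These are the objects guessed at each stage of the construction of a descending sequence. -/
def Refinement (A B : Set P) : Type _ :=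
  {r : A → B // ∀ p, (r p : P) ≤ p}

/-- The descending sequence that starts at `p₀` and follows the refinements `r i`. -/
def Refinement.descend {K : ℕ → Set P} (r : ∀ i, Refinement (K i) (K (i + 1))) (p₀ : K 0) :
    ∀ i, K i
  | 0 => p₀
  | i + 1 => (r i).1 (Refinement.descend r p₀ i)

theorem Refinement.antitone_descend {K : ℕ → Set P} (r : ∀ i, Refinement (K i) (K (i + 1)))
    (p₀ : K 0) : Antitone fun i ↦ (Refinement.descend r p₀ i : P) :=
  antitone_nat_of_succ_le fun i ↦ (r i).2 _

theorem Refinement.nonempty_of_subset {A B : Set P} (hAB : A ⊆ B) : Nonempty (Refinement A B) :=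
  ⟨⟨inclusion hAB, fun _ ↦ le_rfl⟩⟩

theorem Refinement.countable_of_finite {A B : Set P} (hA : A.Finite) (hB : B.Countable) :
    Countable (Refinement A B) :=
  have := hA.to_subtype
  have := hB.to_subtype
  Subtype.countable

theorem exists_antitone_forall_infinite_setOf_mem_of_monotone {K : ℕ → Set P} (hK : Monotone K)
    (hfin : ∀ i, (K i).Finite) (hne : (K 0).Nonempty) :
    ∃ c : (ℕ → ℕ) → ℕ → P, (∀ f, Antitone (c f)) ∧ ∀ F, IsInfinitelyEqual F → ∀ D : ℕ → Set P,
      {i | ∀ p ∈ K i, ∃ q ∈ D i ∩ K (i + 1), q ≤ p}.Infinite →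
        ∃ f ∈ F, {i | c f i ∈ D i}.Infinite := by
  have (i : ℕ) : Nonempty (Refinement (K i) (K (i + 1))) :=
    Refinement.nonempty_of_subset (hK i.le_succ)
  have (i : ℕ) : Countable (Refinement (K i) (K (i + 1))) :=
    Refinement.countable_of_finite (hfin i) (hfin (i + 1)).countable
  obtain ⟨R, hR⟩ := exists_forall_infinite_setOf_eq_of_isInfinitelyEqual
    (β := fun i ↦ Refinement (K i) (K (i + 1)))
  obtain ⟨p₀, hp₀⟩ := hne
  refine ⟨fun f i ↦ Refinement.descend (R f) ⟨p₀, hp₀⟩ (i + 1), fun f i j hij ↦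
    Refinement.antitone_descend (R f) _ (Nat.succ_le_succ hij), fun F hF D hX ↦ ?_⟩
  have htarget (i : ℕ) : ∃ r : Refinement (K i) (K (i + 1)),
      (∀ p ∈ K i, ∃ q ∈ D i ∩ K (i + 1), q ≤ p) → ∀ p, (r.1 p : P) ∈ D i := by
    by_cases hi : ∀ p ∈ K i, ∃ q ∈ D i ∩ K (i + 1), q ≤ p
    · choose q hq hqp using hi
      exact ⟨⟨fun p ↦ ⟨q p p.2, (hq p p.2).2⟩, fun p ↦ hqp p p.2⟩, fun _ p ↦ (hq p p.2).1⟩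
    · exact ⟨Classical.arbitrary _, fun h ↦ (hi h).elim⟩
  choose g hg using htarget
  obtain ⟨f, hfF, hf⟩ := hR F hF _ hX g
  refine ⟨f, hfF, hf.mono ?_⟩
  rintro i ⟨hi, hfi⟩
  change ((R f i).1 _ : P) ∈ D i
  rw [hfi]
  exact hg i hi _

theorem exists_subset_image_Iic_of_finite {α : Type*} {e : ℕ → α} (he : e.Surjective) {s : Set α}
    (hs : s.Finite) : ∃ b, s ⊆ e '' Iic b := by
  choose code hcode using he
  obtain ⟨b, hb⟩ := (hs.image code).bddAbove
  exact ⟨b, fun p hp ↦ ⟨code p, hb (mem_image_of_mem code hp), hcode p⟩⟩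

theorem exists_forall_le_exists_mem_inter_image_Iic {e : ℕ → P} (he : e.Surjective) {D : ℕ → Set P}
    (hD : ∀ i p, ∃ q ∈ D i, q ≤ p) (m : ℕ) :
    ∃ b, ∀ i ≤ m, ∀ p ∈ e '' Iic m, ∃ q ∈ D i ∩ e '' Iic b, q ≤ p := by
  choose ψ hψ hle using hD
  obtain ⟨b, hb⟩ := exists_subset_image_Iic_of_finite he
    ((finite_Iic m).image2 ψ ((finite_Iic m).image e))
  exact ⟨b, fun i hi p hp ↦ ⟨ψ i p, ⟨hψ i p, hb (mem_image2_of_mem hi hp)⟩, hle i p⟩⟩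

theorem exists_antitone_forall_infinite_setOf_mem [Countable P] [Nonempty P] :
    ∃ c : (ℕ → ℕ) → (ℕ → ℕ) → ℕ → P, (∀ h f, Antitone (c h f)) ∧
      ∀ F, IsInfinitelyEqual F → ∀ D : ℕ → Set P, (∀ i p, ∃ q ∈ D i, q ≤ p) →
        ∃ h ∈ F, ∃ f ∈ F, {i | c h f i ∈ D i}.Infinite := by
  obtain ⟨M, hM, hscale⟩ := exists_strictMono_forall_infinite_setOf_apply_le
  obtain ⟨e, he⟩ := exists_surjective_nat P
  have hdescent (h : ℕ → ℕ) := exists_antitone_forall_infinite_setOf_mem_of_monotone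
    (K := fun i ↦ e '' Iic (M h i))
    (fun i j hij ↦ image_mono (Iic_subset_Iic.2 ((hM h).monotone hij)))
    (fun i ↦ (finite_Iic _).image e) (nonempty_Iic.image e)
  choose c hc hmeet using hdescent
  refine ⟨c, hc, fun F hF D hD ↦ ?_⟩
  choose φ hφ using exists_forall_le_exists_mem_inter_image_Iic he hD
  obtain ⟨h, hhF, hh⟩ := hscale F hF φ
  refine ⟨h, hhF, hmeet h F hF D (hh.mono fun i hi p hp ↦ ?_)⟩
  obtain ⟨q, ⟨hqD, hq⟩, hqp⟩ := hφ (M h i) i ((hM h).le_apply) p hp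
  exact ⟨q, ⟨hqD, image_mono (Iic_subset_Iic.2 hi) hq⟩, hqp⟩

end Descent

section Nonmeagre

theorem not_isMeagre_of_forall_exists_infinite {X : Type*} [TopologicalSpace X] {S : Set X}
    (hS : ∀ U : ℕ → Set X, (∀ n, IsOpen (U n)) → (∀ n, Dense (U n)) →
      ∃ x ∈ S, {n | x ∈ U n}.Infinite) : ¬ IsMeagre S := by
  intro hmeagre
  obtain ⟨T, hTopen, hTdense, hTcount, hTS⟩ := mem_residual_iff.1 hmeagre
  obtain ⟨V, hV⟩ := (hTcount.insert Set.univ).exists_eq_range (insert_nonempty _ _)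
  have hVT (n : ℕ) : V n ∈ insert Set.univ T := hV ▸ mem_range_self n
  have hVopen (n : ℕ) : IsOpen (V n) := (hVT n).elim (· ▸ isOpen_univ) (hTopen _)
  have hVdense (n : ℕ) : Dense (V n) := (hVT n).elim (· ▸ dense_univ) (hTdense _)
  have hfin (n : ℕ) : (V '' Iic n).Finite := (finite_Iic n).image V
  obtain ⟨x, hxS, hx⟩ := hS (fun n ↦ ⋂₀ (V '' Iic n))
    (fun n ↦ (hfin n).isOpen_sInter (forall_mem_image.2 fun i _ ↦ hVopen i))
    (fun n ↦ (hfin n).dense_sInter (forall_mem_image.2 fun i _ ↦ hVopen i)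
      (forall_mem_image.2 fun i _ ↦ hVdense i))
  refine hTS (fun t ht ↦ ?_) hxS
  obtain ⟨n, rfl⟩ : t ∈ range V := hV ▸ mem_insert_of_mem _ ht
  obtain ⟨i, hi, hni⟩ := hx.exists_gt n
  exact hi (V n) (mem_image_of_mem V hni.le)

theorem exists_forall_not_isMeagre_image2 {X : Type*} [TopologicalSpace X] {𝓑 : Set (Set X)}
    (hcount : 𝓑.Countable) (hne : 𝓑.Nonempty)
    (hbase : ∀ U : Set X, IsOpen U → Dense U → ∀ B ∈ 𝓑, ∃ B' ∈ 𝓑, B' ⊆ B ∩ U)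
    (hchain : ∀ C : ℕ → Set X, (∀ i, C i ∈ 𝓑) → Antitone C → (⋂ i, C i).Nonempty) :
    ∃ x : (ℕ → ℕ) → (ℕ → ℕ) → X, ∀ F, IsInfinitelyEqual F → ¬ IsMeagre (image2 x F F) := by
  have := hcount.to_subtype
  have := hne.to_subtype
  obtain ⟨c, hanti, hmeet⟩ := exists_antitone_forall_infinite_setOf_mem (P := 𝓑)
  choose x hx using fun h f ↦ hchain (fun i ↦ c h f i) (fun i ↦ (c h f i).2)
    fun i j hij ↦ hanti h f hij
  refine ⟨x, fun F hF ↦ not_isMeagre_of_forall_exists_infinite fun U hUo hUd ↦ ?_⟩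
  obtain ⟨h, hh, f, hf, hinf⟩ := hmeet F hF (fun n ↦ {B | B.1 ⊆ U n}) fun n B ↦
    have ⟨B', hB', hsub⟩ := hbase (U n) (hUo n) (hUd n) B B.2
    ⟨⟨B', hB'⟩, hsub.trans inter_subset_right, hsub.trans inter_subset_left⟩
  exact ⟨x h f, mem_image2_of_mem hh hf, hinf.mono fun i (hi : (c h f i).1 ⊆ U i) ↦
    hi (mem_iInter.1 (hx h f) i)⟩

end Nonmeagre

section Cylinder

variable {E : ℕ → Type*}

theorem countable_setOf_eq_cylinder [∀ n, Countable (E n)] :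
    {C : Set (∀ n, E n) | ∃ x n, C = PiNat.cylinder x n}.Countable := by
  let cyl (n : ℕ) (s : ∀ i : Fin n, E i) : Set (∀ n, E n) := {y | ∀ i : Fin n, y i = s i}
  refine (countable_iUnion fun n ↦ countable_range (cyl n)).mono ?_
  rintro _ ⟨x, n, rfl⟩
  refine mem_iUnion.2 ⟨n, fun i ↦ x i, ?_⟩
  ext y
  exact Fin.forall_iff

theorem exists_cylinder_subset_inter [∀ n, TopologicalSpace (E n)] [∀ n, DiscreteTopology (E n)]
    {U : Set (∀ n, E n)} (hUo : IsOpen U) (hUd : Dense U) (x : ∀ n, E n) (n : ℕ) :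
    ∃ y m, PiNat.cylinder y m ⊆ PiNat.cylinder x n ∩ U := by
  have hopen := PiNat.isOpen_cylinder E x n
  obtain ⟨y, hy⟩ := hUd.inter_open_nonempty _ hopen ⟨x, PiNat.self_mem_cylinder x n⟩
  obtain ⟨_, ⟨z, m, rfl⟩, -, hsub⟩ :=
    (PiNat.isTopologicalBasis_cylinders E).exists_subset_of_mem_open hy (hopen.inter hUo)
  exact ⟨z, m, hsub⟩

theorem nonempty_iInter_cylinder_of_antitone [∀ n, Nonempty (E n)] {x : ℕ → ∀ n, E n} {n : ℕ → ℕ}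
    (hanti : Antitone fun i ↦ PiNat.cylinder (x i) (n i)) :
    (⋂ i, PiNat.cylinder (x i) (n i)).Nonempty := by
  have hagree (i j k : ℕ) (hi : k < n i) (hj : k < n j) : x i k = x j k := by
    have hmem := PiNat.self_mem_cylinder (x (max i j)) (n (max i j))
    exact (hanti (le_max_left i j) hmem k hi).symm.trans (hanti (le_max_right i j) hmem k hj)
  have hvalue (k : ℕ) : ∃ v : E k, ∀ i, k < n i → v = x i k := by
    by_cases hk : ∃ i, k < n i
    · obtain ⟨i, hi⟩ := hk
      exact ⟨x i k, fun j hj ↦ hagree i j k hi hj⟩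
    · exact ⟨Classical.arbitrary _, fun i hi ↦ (hk ⟨i, hi⟩).elim⟩
  choose y hy using hvalue
  exact ⟨y, mem_iInter.2 fun i k hk ↦ hy k i hk⟩

end Cylinder

theorem IsInfinitelyEqual.exists_mk_le_not_isMeagre {F : Set (ℕ → ℕ)} (hF : IsInfinitelyEqual F) :
    ∃ S : Set (ℕ → ℕ), #S ≤ #F ∧ ¬ IsMeagre S := by
  obtain ⟨x, hx⟩ := exists_forall_not_isMeagre_image2
    (countable_setOf_eq_cylinder (E := fun _ ↦ ℕ)) ⟨_, 0, 0, rfl⟩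
    (by
      rintro U hUo hUd _ ⟨x, n, rfl⟩
      obtain ⟨y, m, hsub⟩ := exists_cylinder_subset_inter hUo hUd x n
      exact ⟨_, ⟨y, m, rfl⟩, hsub⟩)
    (by
      intro C hC hanti
      choose x n hxn using hC
      obtain rfl : C = fun i ↦ PiNat.cylinder (x i) (n i) := funext hxn
      exact nonempty_iInter_cylinder_of_antitone hanti)
  have := hF.infinite.to_subtype
  exact ⟨_, mk_image2_le.trans (mul_eq_self (aleph0_le_mk F)).le, hx F hF⟩

/-- b_≂ = non(M) on Baire space. -/
theorem stmt3 :
    sInf {c : Cardinal | ∃ F : Set (ℕ → ℕ), #F = c ∧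
        ∀ g : ℕ → ℕ, ∃ f ∈ F, {k : ℕ | f k = g k}.Infinite} =
      sInf {c : Cardinal | ∃ S : Set (ℕ → ℕ), #S = c ∧ ¬ IsMeagre S} := by
  have huniv : ¬ IsMeagre (univ : Set (ℕ → ℕ)) := not_isMeagre_of_isOpen isOpen_univ univ_nonempty
  apply le_antisymm
  · refine le_csInf ⟨_, univ, rfl, huniv⟩ ?_
    rintro _ ⟨S, rfl, hS⟩
    exact csInf_le' ⟨S, rfl, isInfinitelyEqual_of_not_isMeagre hS⟩
  · refine le_csInf ⟨_, univ, rfl, isInfinitelyEqual_of_not_isMeagre huniv⟩ ?_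
    rintro _ ⟨F, rfl, hF⟩
    obtain ⟨S, hSF, hS⟩ := IsInfinitelyEqual.exists_mk_le_not_isMeagre hF
    exact le_trans (csInf_le' ⟨S, rfl, hS⟩) hSF
end

section
/- The least cardinality of a family D ⊆ ω^ω such that for every f ∈ ω^ω there exists g ∈ D with f(k) ≠ g(k) for all but finitely many k equals cov(M), the least cardinality of a family of meager subsets of ω^ω whose union is all of ω^ω. (In the paper's notation: d_≂ = cov(M), where f ≂ g iff f(k) ≠ g(k) for all but finitely many k.) -/
open Cardinal Set Filter

open TopologicalSpace Topology

/-!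
If `|ι| < 𝔡_≂`, then any `ι`-indexed family of functions is guessed infinitely often by a single
function. The sets `{f | f ≂ g}` are meager, so `cov(M) ≤ 𝔡_≂`. For the converse, a meager set is
avoided by following a suitable Banach–Mazur strategy infinitely often, so it suffices to find, for
`|ι| < 𝔡_≂` strategies on countably many positions, one run that follows each of them infinitely
often. Guessing is used twice. First it produces bounds `b 0 < b 1 < ⋯` such that, for each strategy
and infinitely many `n`, the replies to all positions with code at most `b n` have code at most
`b (n + 1)`. Then, at stage `n`, one guesses the restriction of a strategy to the finitely many
positions with code at most `b n`, and each strategy is guessed correctly at infinitely many of its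
good stages. The run obeys a guess whenever it is the reply of some strategy and its code is at most
`b (n + 1)`.
-/

/-- The condition `|ι| < 𝔡_≂`, expressed for an index type so that no cardinals are needed: any
`ι`-indexed family of elements of `ω^ω` has a common infinitely often equal function. -/
def HasInfOftenEqual (ι : Type*) : Prop :=
  ∀ F : ι → ℕ → ℕ, ∃ g : ℕ → ℕ, ∀ i, ∃ᶠ n in atTop, F i n = g n

theorem exists_forall_card_fst_gt_imp_mem_graph {α β : Type*} [DecidableEq α] [Nonempty β]
    (G : ℕ → Finset (α × β)) :
    ∃ g : α → β, ∀ n, n < ((G n).image Prod.fst).card → ∃ a, (a, g a) ∈ G n := by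
  let large : Set ℕ := {n | n < ((G n).image Prod.fst).card}
  have hall : ∀ s : Finset large,
      s.card ≤ (s.biUnion fun n => (G n).image Prod.fst).card := by
    intro s
    rcases s.eq_empty_or_nonempty with rfl | hs
    · simp
    · have hsub : s.map (Function.Embedding.subtype _) ⊆ Finset.range (s.max' hs + 1) := by
        intro n hn
        obtain ⟨m, hm, rfl⟩ := Finset.mem_map.1 hn
        exact Finset.mem_range_succ_iff.2 (s.le_max' m hm)
      calc s.card ≤ s.max' hs + 1 := by simpa using Finset.card_le_card hsub
        _ ≤ ((G (s.max' hs)).image Prod.fst).card := (s.max' hs).2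
        _ ≤ _ := Finset.card_le_card
          (Finset.subset_biUnion_of_mem (fun n : large => (G n).image Prod.fst) (s.max'_mem hs))
  obtain ⟨a, ha_inj, ha⟩ := (Finset.all_card_le_biUnion_card_iff_exists_injective _).1 hall
  have hvalue : ∀ n : large, ∃ b, (a n, b) ∈ G n := fun n => by simpa using ha n
  choose b hb using hvalue
  refine ⟨Function.extend a b fun _ => Classical.arbitrary β, fun n hn => ⟨a ⟨n, hn⟩, ?_⟩⟩
  rw [ha_inj.extend_apply]
  exact hb ⟨n, hn⟩

theorem exists_strictMono_ge (f : ℕ → ℕ) : ∃ g : ℕ → ℕ, StrictMono g ∧ (∀ n, n < g n) ∧ f ≤ g := by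
  refine ⟨fun n => partialSups f n + (n + 1), fun m n hmn => ?_, fun n => ?_, fun n => ?_⟩
  · exact add_lt_add_of_le_of_lt ((partialSups f).monotone hmn.le) (Nat.succ_lt_succ hmn)
  · exact n.lt_succ_self.trans_le (Nat.le_add_left _ _)
  · exact (le_partialSups f n).trans (Nat.le_add_right _ _)

theorem exists_mem_Ico_succ_of_strictMono {b : ℕ → ℕ} (hb : StrictMono b) {N n : ℕ}
    (hn : b N ≤ n) : ∃ k ≥ N, n ∈ Ico (b k) (b (k + 1)) := by
  have htail : StrictMono fun k => b (N + k) := hb.comp add_right_strictMono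
  have hcover := iUnion_Ico_map_succ_eq_Ici (fun k => htail.monotone k.zero_le)
    htail.not_bddAbove_range_of_wellFoundedLT
  obtain ⟨k, hk⟩ := mem_iUnion.1 (hcover.ge hn)
  exact ⟨N + k, Nat.le_add_right N k, hk⟩

theorem tendsto_atTop_of_monotone_of_frequently_lt {f : ℕ → ℕ} (hf : Monotone f)
    (hlt : ∃ᶠ n in atTop, f n < f (n + 1)) : Tendsto f atTop atTop := by
  refine tendsto_atTop_atTop_of_monotone hf fun k => ?_
  induction k with
  | zero => exact ⟨0, Nat.zero_le _⟩
  | succ k ih =>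
    obtain ⟨m, hm⟩ := ih
    obtain ⟨n, hmn, hn⟩ := frequently_atTop.1 hlt m
    exact ⟨n + 1, (hm.trans (hf hmn)).trans_lt hn⟩

theorem exists_orbit_following_guesses {ι α : Type*} {S : ℕ → Set α} (hS : Monotone S)
    (hS_zero : (S 0).Nonempty) (d : ι → α → α) (g : ∀ n, S n → α) :
    ∃ p : ∀ n, S n,
      (∀ n, (p (n + 1) : α) = p n ∨ ∃ i, (p (n + 1) : α) = d i (p n)) ∧
      ∀ n i, g n (p n) = d i (p n) → d i (p n) ∈ S (n + 1) → (p (n + 1) : α) = d i (p n) := by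
  have hstep : ∀ n (q : S n), ∃ q' : S (n + 1),
      ((q' : α) = q ∨ ∃ i, (q' : α) = d i q) ∧
      ∀ i, g n q = d i q → d i q ∈ S (n + 1) → (q' : α) = d i q := by
    intro n q
    by_cases hq : ∃ i, g n q = d i q ∧ d i q ∈ S (n + 1)
    · obtain ⟨i, hi, hmem⟩ := hq
      exact ⟨⟨d i q, hmem⟩, Or.inr ⟨i, rfl⟩, fun j hj _ => hi.symm.trans hj⟩
    · exact ⟨⟨q, hS n.le_succ q.2⟩, Or.inl rfl, fun i hi hmem => absurd ⟨i, hi, hmem⟩ hq⟩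
  choose step hstep_move hstep_guess using hstep
  let p : ∀ n, S n := Nat.rec ⟨_, hS_zero.choose_spec⟩ step
  exact ⟨p, fun n => hstep_move n (p n), fun n => hstep_guess n (p n)⟩

namespace HasInfOftenEqual

variable {ι : Type*}

theorem exists_frequently_mem_eq_nat (H : HasInfOftenEqual ι) (F : ι → ℕ → ℕ) (X : ι → Set ℕ)
    (hX : ∀ i, ∃ᶠ n in atTop, n ∈ X i) :
    ∃ g : ℕ → ℕ, ∀ i, ∃ᶠ n in atTop, n ∈ X i ∧ F i n = g n := by
  have hT : ∀ i n, ∃ T : Finset ℕ, (T : Set ℕ) ⊆ X i ∩ Ici n ∧ T.card = n + 1 := fun i n =>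
    (Nat.frequently_atTop_iff_infinite.1
      ((hX i).and_eventually (eventually_ge_atTop n))).exists_subset_card_eq _
  choose T hT_sub hT_card using hT
  let graph : ι → ℕ → Finset (ℕ × ℕ) := fun i n => (T i n).image fun k => (k, F i k)
  let code : Finset (ℕ × ℕ) ≃ ℕ := Denumerable.eqv _
  obtain ⟨c, hc⟩ := H fun i n => code (graph i n)
  obtain ⟨g, hg⟩ := exists_forall_card_fst_gt_imp_mem_graph fun n => code.symm (c n)
  refine ⟨g, fun i => frequently_atTop.2 fun N => ?_⟩
  obtain ⟨n, hNn, hn⟩ := frequently_atTop.1 (hc i) N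
  have hguess : code.symm (c n) = graph i n := code.symm_apply_eq.2 hn.symm
  have hdom : (graph i n).image Prod.fst = T i n := by
    simp [graph, Finset.image_image, Function.comp_def]
  obtain ⟨k, hk⟩ := hg n (by rw [hguess, hdom, hT_card]; exact n.lt_succ_self)
  obtain ⟨hkT, hFk⟩ : k ∈ T i n ∧ F i k = g k := by simpa [hguess, graph] using hk
  obtain ⟨hkX, hnk⟩ := hT_sub i n hkT
  exact ⟨k, hNn.trans hnk, hkX, hFk⟩

theorem exists_frequently_mem_eq (H : HasInfOftenEqual ι) {α : ℕ → Type*} [∀ n, Countable (α n)]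
    [∀ n, Nonempty (α n)] (F : ι → ∀ n, α n) (X : ι → Set ℕ) (hX : ∀ i, ∃ᶠ n in atTop, n ∈ X i) :
    ∃ g : ∀ n, α n, ∀ i, ∃ᶠ n in atTop, n ∈ X i ∧ F i n = g n := by
  choose e he using fun n => exists_injective_nat (α n)
  obtain ⟨c, hc⟩ := H.exists_frequently_mem_eq_nat (fun i n => e n (F i n)) X hX
  refine ⟨fun n => Function.invFun (e n) (c n), fun i => (hc i).mono ?_⟩
  rintro n ⟨hnX, hn⟩
  exact ⟨hnX, by simp only [← hn, Function.leftInverse_invFun (he n) _]⟩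

theorem exists_strictMono_frequently_le (H : HasInfOftenEqual ι) (h : ι → ℕ → ℕ)
    (h_mono : ∀ i, Monotone (h i)) (m : ℕ) :
    ∃ b : ℕ → ℕ, b 0 = m ∧ StrictMono b ∧ ∀ i, ∃ᶠ n in atTop, h i (b n) ≤ b (n + 1) := by
  obtain ⟨c, hc⟩ := H fun i n => h i (h i n)
  obtain ⟨C, hC_mono, hC_lt, hcC⟩ := exists_strictMono_ge c
  let b : ℕ → ℕ := fun n => C^[n] m
  have hb_succ : ∀ n, b (n + 1) = C (b n) := fun n => Function.iterate_succ_apply' C n m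
  have hb_mono : StrictMono b := strictMono_nat_of_lt_succ fun n => by
    rw [hb_succ]; exact hC_lt _
  refine ⟨b, rfl, hb_mono, fun i => frequently_atTop.2 fun N => ?_⟩
  obtain ⟨n, hNn, hn⟩ := frequently_atTop.1 (hc i) (b N)
  obtain ⟨k, hNk, hkn, hnk⟩ := exists_mem_Ico_succ_of_strictMono hb_mono hNn
  -- If `h i` escapes `[b k, b (k + 1))` from `b k`, then `h i (b (k + 1)) ≤ h i (h i n) ≤ C n`.
  rcases le_or_gt (h i (b k)) (b (k + 1)) with hle | hgt
  · exact ⟨k, hNk, hle⟩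
  · refine ⟨k + 1, hNk.trans k.le_succ, ?_⟩
    calc h i (b (k + 1)) ≤ h i (h i n) := h_mono i (hgt.le.trans (h_mono i hkn))
      _ = c n := hn
      _ ≤ C n := hcC n
      _ ≤ C (b (k + 1)) := hC_mono.monotone hnk.le
      _ = b (k + 1 + 1) := (hb_succ _).symm

theorem exists_orbit_frequently_eq (H : HasInfOftenEqual ι) {α : Type*} [Countable α] [Nonempty α]
    (d : ι → α → α) :
    ∃ p : ℕ → α, (∀ n, p (n + 1) = p n ∨ ∃ i, p (n + 1) = d i (p n)) ∧
      ∀ i, ∃ᶠ n in atTop, p (n + 1) = d i (p n) := by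
  obtain ⟨code, hcode⟩ := exists_injective_nat α
  have hfin : ∀ m, {q | code q ≤ m}.Finite := fun m => (finite_Iic m).preimage hcode.injOn
  let h : ι → ℕ → ℕ := fun i m => (hfin m).toFinset.sup fun q => code (d i q)
  have h_mono : ∀ i, Monotone (h i) := fun i m n hmn =>
    Finset.sup_mono (Finite.toFinset_subset_toFinset.2 fun q hq => le_trans hq hmn)
  have code_le_h : ∀ i m q, code q ≤ m → code (d i q) ≤ h i m := fun i m q hq =>
    Finset.le_sup (f := fun q => code (d i q)) ((hfin m).mem_toFinset.2 hq)
  obtain ⟨a⟩ := ‹Nonempty α›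
  obtain ⟨b, hb_zero, hb_mono, hb⟩ := H.exists_strictMono_frequently_le h h_mono (code a)
  let S : ℕ → Set α := fun n => {q | code q ≤ b n}
  have hS : Monotone S := fun m n hmn q hq => le_trans hq (hb_mono.monotone hmn)
  have : ∀ n, Finite (S n) := fun n => hfin (b n)
  obtain ⟨g, hg⟩ := H.exists_frequently_mem_eq (α := fun n => S n → α) (fun i _ q => d i q)
    (fun i => {n | h i (b n) ≤ b (n + 1)}) hb
  obtain ⟨p, hp_move, hp_guess⟩ := exists_orbit_following_guesses hS ⟨a, hb_zero.ge⟩ d g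
  refine ⟨fun n => p n, hp_move, fun i => (hg i).mono ?_⟩
  rintro n ⟨hn, hgn⟩
  exact hp_guess n i (congrFun hgn (p n)).symm ((code_le_h i _ _ (p n).2).trans hn)

end HasInfOftenEqual

theorem isMeagre_setOf_eventually_ne {Y : ℕ → Type*} [∀ k, TopologicalSpace (Y k)]
    [∀ k, DiscreteTopology (Y k)] (g : ∀ k, Y k) :
    IsMeagre {f : ∀ k, Y k | ∀ᶠ k in atTop, f k ≠ g k} := by
  have hopen : ∀ N, IsOpen {f : ∀ k, Y k | ∃ k ≥ N, f k = g k} := by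
    intro N
    have heq : {f : ∀ k, Y k | ∃ k ≥ N, f k = g k} = ⋃ k ≥ N, (fun f => f k) ⁻¹' {g k} := by
      ext f
      simp
    rw [heq]
    exact isOpen_biUnion fun k _ => (isOpen_discrete _).preimage (continuous_apply k)
  have hdense : ∀ N, Dense {f : ∀ k, Y k | ∃ k ≥ N, f k = g k} := by
    intro N f
    have hlim : Tendsto (fun M k => if k < M then f k else g k) atTop (𝓝 f) :=
      tendsto_pi_nhds.2 fun k => tendsto_const_nhds.congr'
        ((eventually_gt_atTop k).mono fun M hM => (if_pos hM).symm)
    exact mem_closure_of_tendsto hlim <| Eventually.of_forall fun M =>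
      ⟨max M N, le_max_right M N, by simp⟩
  have hres : ∀ N, {f : ∀ k, Y k | ∃ k ≥ N, f k = g k} ∈ residual (∀ k, Y k) := fun N =>
    residual_of_dense_open (hopen N) (hdense N)
  refine mem_of_superset (countable_iInter_mem.2 hres) fun f hf => ?_
  have : ∃ᶠ k in atTop, f k = g k := frequently_atTop.2 (mem_iInter.1 hf)
  simpa [Filter.Frequently] using this

theorem exists_isOpen_dense_disjoint_of_isMeagre {X : Type*} [TopologicalSpace X] [BaireSpace X]
    {A : Set X} (hA : IsMeagre A) :
    ∃ U : ℕ → Set X, (∀ k, IsOpen (U k)) ∧ (∀ k, Dense (U k)) ∧ Disjoint (⋂ k, U k) A := by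
  obtain ⟨t, htA, htG, htd⟩ := mem_residual.1 hA
  obtain ⟨U, hU, rfl⟩ := isGδ_iff_eq_iInter_nat.1 htG
  exact ⟨U, hU, fun k => htd.mono (iInter_subset U k), subset_compl_iff_disjoint_right.1 htA⟩

section RationalBall

variable {X : Type*} [PseudoMetricSpace X] [SeparableSpace X] [Nonempty X]

variable (X) in
/-- The closed ball of radius `2⁻ⁿ` around the `j`-th point of a fixed dense sequence, where
`q = (j, n)`. These balls, indexed by pairs so that an index remembers its radius, are the positions
of the Banach–Mazur game. -/
def rationalBall (q : ℕ × ℕ) : Set X :=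
  Metric.closedBall (denseSeq X q.1) ((1 / 2) ^ q.2)

theorem exists_rationalBall_subset_inter {U : Set X} (hU : IsOpen U) (hUd : Dense U) (q : ℕ × ℕ) :
    ∃ q' : ℕ × ℕ, q.2 < q'.2 ∧ rationalBall X q' ⊆ rationalBall X q ∩ U := by
  let V := Metric.ball (denseSeq X q.1) ((1 / 2) ^ q.2) ∩ U
  have hV : IsOpen V := Metric.isOpen_ball.inter hU
  have hVne : V.Nonempty :=
    hUd.inter_open_nonempty _ Metric.isOpen_ball (Metric.nonempty_ball.2 (by positivity))
  obtain ⟨j, hj⟩ := (denseRange_denseSeq X).exists_mem_open hV hVne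
  obtain ⟨m, -, hm⟩ := (Metric.nhds_basis_closedBall_pow one_half_pos one_half_lt_one).mem_iff.1
    (hV.mem_nhds hj)
  refine ⟨(j, max m (q.2 + 1)), Nat.lt_of_succ_le (le_max_right _ _), ?_⟩
  calc rationalBall X (j, max m (q.2 + 1))
    _ ⊆ Metric.closedBall (denseSeq X j) ((1 / 2) ^ m) := Metric.closedBall_subset_closedBall <|
      pow_le_pow_of_le_one one_half_pos.le one_half_lt_one.le (le_max_left _ _)
    _ ⊆ V := hm
    _ ⊆ rationalBall X q ∩ U := inter_subset_inter_left U Metric.ball_subset_closedBall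

theorem nonempty_iInter_rationalBall [CompleteSpace X] {p : ℕ → ℕ × ℕ}
    (hp : Antitone fun n => rationalBall X (p n)) (hr : Tendsto (fun n => (p n).2) atTop atTop) :
    (⋂ n, rationalBall X (p n)).Nonempty := by
  refine Metric.nonempty_iInter_of_nonempty_biInter (fun n => Metric.isClosed_closedBall)
    (fun n => Metric.isBounded_closedBall) (fun N => ?_) ?_
  · exact ⟨denseSeq X (p N).1, mem_iInter₂.2 fun n hn =>
      hp hn (Metric.mem_closedBall_self (by positivity))⟩
  · have : Tendsto (fun n => 2 * (1 / 2 : ℝ) ^ (p n).2) atTop (𝓝 0) := by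
      simpa using ((tendsto_pow_atTop_nhds_zero_of_lt_one one_half_pos.le
        (one_half_lt_one (α := ℝ))).comp hr).const_mul 2
    exact squeeze_zero (fun _ => Metric.diam_nonneg)
      (fun n => Metric.diam_closedBall (by positivity)) this

theorem exists_strategy_of_isMeagre [CompleteSpace X] {A : Set X} (hA : IsMeagre A) :
    ∃ d : ℕ × ℕ → ℕ × ℕ, (∀ q, q.2 < (d q).2) ∧ (∀ q, rationalBall X (d q) ⊆ rationalBall X q) ∧
      ∀ x, (∀ k, ∃ q : ℕ × ℕ, k ≤ q.2 ∧ x ∈ rationalBall X (d q)) → x ∉ A := by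
  obtain ⟨U, hU_open, hU_dense, hU_disj⟩ := exists_isOpen_dense_disjoint_of_isMeagre hA
  have hreply : ∀ q : ℕ × ℕ, ∃ q' : ℕ × ℕ, q.2 < q'.2 ∧
      rationalBall X q' ⊆ rationalBall X q ∩ ⋂ k ∈ Iic q.2, U k := fun q =>
    exists_rationalBall_subset_inter ((finite_Iic q.2).isOpen_biInter fun k _ => hU_open k)
      (dense_biInter_of_isOpen (fun k _ => hU_open k) (to_countable _) fun k _ => hU_dense k) q
  choose d hd_lt hd_sub using hreply
  refine ⟨d, hd_lt, fun q => (hd_sub q).trans inter_subset_left, fun x hx => ?_⟩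
  refine disjoint_left.1 hU_disj (mem_iInter.2 fun k => ?_)
  obtain ⟨q, hkq, hxq⟩ := hx k
  exact mem_iInter₂.1 (hd_sub q hxq).2 k hkq

end RationalBall

theorem HasInfOftenEqual.iUnion_ne_univ {ι X : Type*} [TopologicalSpace X] [PolishSpace X]
    [Nonempty X] (H : HasInfOftenEqual ι) {A : ι → Set X} (hA : ∀ i, IsMeagre (A i)) :
    ⋃ i, A i ≠ Set.univ := by
  let := upgradeIsCompletelyMetrizable X
  rcases isEmpty_or_nonempty ι with hι | ⟨⟨i₀⟩⟩
  · simpa using empty_ne_univ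
  choose d hd_lt hd_sub hd_avoid using fun i => exists_strategy_of_isMeagre (hA i)
  obtain ⟨p, hp, hpd⟩ := H.exists_orbit_frequently_eq d
  have hanti : Antitone fun n => rationalBall X (p n) := antitone_nat_of_succ_le fun n => by
    rcases hp n with h | ⟨i, h⟩ <;> rw [h]
    exact hd_sub i (p n)
  have hmono : Monotone fun n => (p n).2 := monotone_nat_of_le_succ fun n => by
    rcases hp n with h | ⟨i, h⟩ <;> rw [h]
    exact (hd_lt i (p n)).le
  have hlim : Tendsto (fun n => (p n).2) atTop atTop :=
    tendsto_atTop_of_monotone_of_frequently_lt hmono <| (hpd i₀).mono fun n hn => by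
      rw [hn]; exact hd_lt i₀ (p n)
  obtain ⟨x, hx⟩ := nonempty_iInter_rationalBall hanti hlim
  have hx_avoid : ∀ i, x ∉ A i := fun i => hd_avoid i x fun k => by
    obtain ⟨n, hn, hkn⟩ := ((hpd i).and_eventually (hlim.eventually_ge_atTop k)).exists
    exact ⟨p n, hkn, hn ▸ mem_iInter.1 hx (n + 1)⟩
  exact (ne_univ_iff_exists_notMem _).2 ⟨x, by simpa using hx_avoid⟩

theorem not_hasInfOftenEqual_iff {ι : Type*} :
    ¬ HasInfOftenEqual ι ↔ ∃ F : ι → ℕ → ℕ, ∀ f : ℕ → ℕ, ∃ i, ∀ᶠ k in atTop, f k ≠ F i k := by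
  simp only [HasInfOftenEqual, not_forall, not_exists, not_frequently, ne_comm, ne_eq]

theorem exists_eventually_ne_iff_exists_isMeagre_cover {ι : Type*} :
    (∃ F : ι → ℕ → ℕ, ∀ f : ℕ → ℕ, ∃ i, ∀ᶠ k in atTop, f k ≠ F i k) ↔
      ∃ A : ι → Set (ℕ → ℕ), (∀ i, IsMeagre (A i)) ∧ ⋃ i, A i = Set.univ := by
  constructor
  · rintro ⟨F, hF⟩
    exact ⟨fun i => {f | ∀ᶠ k in atTop, f k ≠ F i k}, fun i => isMeagre_setOf_eventually_ne (F i),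
      iUnion_eq_univ_iff.2 hF⟩
  · rintro ⟨A, hA, hcover⟩
    exact not_hasInfOftenEqual_iff.1 fun H => H.iUnion_ne_univ hA hcover

/-- d_≂ = cov(M) on Baire space. -/
theorem stmt4 :
    sInf {c : Cardinal | ∃ D : Set (ℕ → ℕ), #D = c ∧
        ∀ f : ℕ → ℕ, ∃ g ∈ D, ∀ᶠ k in atTop, f k ≠ g k} =
      sInf {c : Cardinal | ∃ 𝒜 : Set (Set (ℕ → ℕ)), #𝒜 = c ∧
        (∀ A ∈ 𝒜, IsMeagre A) ∧ ⋃₀ 𝒜 = Set.univ} := by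
  apply csInf_eq_csInf_of_forall_exists_le
  · rintro _ ⟨D, rfl, hD⟩
    obtain ⟨A, hA, hcover⟩ := exists_eventually_ne_iff_exists_isMeagre_cover.1
      ⟨((↑) : D → ℕ → ℕ), by simpa using hD⟩
    exact ⟨#(range A), ⟨range A, rfl, forall_mem_range.2 hA, hcover⟩, mk_range_le⟩
  · rintro _ ⟨𝒜, rfl, h𝒜, hcover⟩
    obtain ⟨F, hF⟩ := exists_eventually_ne_iff_exists_isMeagre_cover.2
      ⟨((↑) : 𝒜 → Set (ℕ → ℕ)), fun A => h𝒜 A A.2, sUnion_eq_iUnion ▸ hcover⟩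
    exact ⟨#(range F), ⟨range F, rfl, by simpa using hF⟩, mk_range_le⟩
end
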